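/- arXiv:2009.10102 — 3 statements merged into one kernel-verified Lean document; each statement's English description precedes it below -/
import Mathlib

section
/- Let n ≥ 2, let Ω ⊆ ℝⁿ be open, and let v : ℝⁿ → ℝ be twice continuously differentiable on Ω. Then at every point of Ω one has |Dv|⁴·|D²v|² ≥ 2|Dv|²·|D²v Dv|² + (|Dv|²·Δv − Δ_∞v)²/(n−1) − (Δ_∞v)². -/
/-!
The inequality is pointwise linear algebra. Let `A = D²v`, `p = Dv`, `w = Ap`, `s = |p|²`,
`m = ⟨p, Ap⟩` and `T = s tr A - m`. For `p ≠ 0`, let `P` be the orthogonal projection onto the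
hyperplane `p^⊥`. Then `s² |PAP|² = s² |A|² - 2 s |w|² + m²` and `s tr (PAP) = T`, so the claim is
the Cauchy-Schwarz bound `(tr (PAP))² ≤ (n - 1) |PAP|²`. It is proved below by writing the
difference of the two sides as the squared norm of `s PAP - (T / (n - 1)) P`
(`matrix_inequality`, resting on the expansion `sum_sq_expand`). Symmetry of `A` (`hess_symm`) is
the symmetry of second derivatives of a `C²` function.
-/

/-- The gradient of `u : ℝⁿ → ℝ` at `x`, given by the partial derivatives. -/
noncomputable def grad {n : ℕ} (u : (Fin n → ℝ) → ℝ) (x : Fin n → ℝ) : Fin n → ℝ :=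
  fun i => fderiv ℝ u x (Pi.single i 1)

/-- The Hessian matrix of `u : ℝⁿ → ℝ` at `x`, given by the second partial derivatives. -/
noncomputable def hess {n : ℕ} (u : (Fin n → ℝ) → ℝ) (x : Fin n → ℝ) :
    Matrix (Fin n) (Fin n) ℝ :=
  Matrix.of fun i j => fderiv ℝ (fun y => fderiv ℝ u y (Pi.single j 1)) x (Pi.single i 1)

/-- The Hessian is symmetric at a point where the function is `C²`. -/
lemma hess_symm {n : ℕ} {v : (Fin n → ℝ) → ℝ} {x : Fin n → ℝ} (hv : ContDiffAt ℝ 2 v x)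
    (i j : Fin n) : hess v x i j = hess v x j i := by
  have hd : DifferentiableAt ℝ (fderiv ℝ v) x :=
    (hv.fderiv_right (m := 1) (by norm_num)).differentiableAt (by norm_num)
  have key : ∀ i j, hess v x i j = fderiv ℝ (fderiv ℝ v) x (Pi.single i 1) (Pi.single j 1) := by
    intro i j
    simp only [hess, Matrix.of_apply]
    rw [fderiv_clm_apply hd (differentiableAt_const _)]
    simp
  rw [key, key]
  exact (hv.isSymmSndFDerivAt (by simp)).eq _ _

/-- The squared Frobenius norm of `s A - p wᵀ - w pᵀ + d p pᵀ - c I`, with `w = A p` and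
`s = |p|²`, for symmetric `A`. -/
lemma sum_sq_expand {n : ℕ} (A : Matrix (Fin n) (Fin n) ℝ) (hA : ∀ i j, A i j = A j i)
    (p w : Fin n → ℝ) (hw : ∀ i, w i = ∑ j, A i j * p j) (s m c d : ℝ)
    (hs : ∑ i, p i ^ 2 = s) (hm : ∑ i, p i * w i = m) :
    ∑ i, ∑ j, (s * A i j - p i * w j - w i * p j + d * (p i * p j)
        - c * (if i = j then 1 else 0)) ^ 2
      = s ^ 2 * (∑ i, ∑ j, A i j ^ 2) - 2 * s * (∑ i, w i ^ 2) + 2 * m ^ 2 - 2 * s * d * m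
        - 2 * s * c * A.trace + 4 * c * m + d ^ 2 * s ^ 2 - 2 * d * c * s + c ^ 2 * n := by
  have hApp : ∑ i, ∑ j, A i j * (p i * p j) = m := by
    rw [← hm]
    refine Finset.sum_congr rfl fun i _ => ?_
    rw [hw, Finset.mul_sum]
    exact Finset.sum_congr rfl fun j _ => by ring
  have hAwp : ∑ i, ∑ j, A i j * (w i * p j) = ∑ i, w i ^ 2 := by
    refine Finset.sum_congr rfl fun i _ => ?_
    rw [sq]
    nth_rewrite 3 [hw]
    rw [Finset.mul_sum]
    exact Finset.sum_congr rfl fun j _ => by ring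
  have hApw : ∑ i, ∑ j, A i j * (p i * w j) = ∑ i, w i ^ 2 := by
    rw [← hAwp, Finset.sum_comm]
    refine Finset.sum_congr rfl fun i _ => Finset.sum_congr rfl fun j _ => ?_
    rw [hA j i]; ring
  have hδ : ∀ f : Fin n → Fin n → ℝ,
      ∑ i, ∑ j, f i j * (if i = j then 1 else 0) = ∑ i, f i i := fun f => by simp
  have hpt : ∀ i j, (s * A i j - p i * w j - w i * p j + d * (p i * p j)
        - c * (if i = j then 1 else 0)) ^ 2
      = s ^ 2 * A i j ^ 2 + p i ^ 2 * w j ^ 2 + w i ^ 2 * p j ^ 2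
        + d ^ 2 * (p i ^ 2 * p j ^ 2) + 2 * ((p i * w i) * (p j * w j))
        - 2 * s * (A i j * (p i * w j)) - 2 * s * (A i j * (w i * p j))
        + 2 * s * d * (A i j * (p i * p j))
        - 2 * d * (p i ^ 2 * (p j * w j)) - 2 * d * ((p i * w i) * p j ^ 2)
        + (c ^ 2 - 2 * s * c * A i j + 2 * c * (p i * w j) + 2 * c * (w i * p j)
          - 2 * d * c * (p i * p j)) * (if i = j then 1 else 0) := by
    intro i j
    split_ifs <;> ring
  simp only [hpt, Finset.sum_add_distrib, Finset.sum_sub_distrib, ← Finset.mul_sum, hδ,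
    hApp, hAwp, hApw, hs, hm]
  have h1 : ∑ i, p i * p i = s := by simpa [sq] using hs
  have h2 : ∑ i, w i * p i = m := by simpa [mul_comm] using hm
  simp only [← Finset.sum_mul, h1, h2, hs, hm, Matrix.trace, Matrix.diag_apply, Finset.sum_const,
    Finset.card_univ, Fintype.card_fin, nsmul_eq_mul]
  ring

lemma matrix_inequality {n : ℕ} (hn : 2 ≤ n) (A : Matrix (Fin n) (Fin n) ℝ)
    (hA : ∀ i j, A i j = A j i) (p : Fin n → ℝ) :
    (∑ i, p i ^ 2) ^ 2 * (∑ i, ∑ j, A i j ^ 2) ≥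
      2 * (∑ i, p i ^ 2) * (∑ i, (A.mulVec p i) ^ 2)
        + ((∑ i, p i ^ 2) * A.trace - ∑ i, p i * A.mulVec p i) ^ 2 / ((n : ℝ) - 1)
        - (∑ i, p i * A.mulVec p i) ^ 2 := by
  by_cases hp : p = 0
  · simp [hp]
  have hs0 : ∑ i, p i ^ 2 ≠ 0 := by
    intro h
    apply hp
    ext i
    have := (Finset.sum_eq_zero_iff_of_nonneg fun i _ => sq_nonneg (p i)).1 h i (Finset.mem_univ i)
    simpa using this
  have hn1 : (n : ℝ) - 1 ≠ 0 := by
    have : (2 : ℝ) ≤ n := by exact_mod_cast hn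
    linarith
  obtain ⟨s, hs⟩ : ∃ s, ∑ i, p i ^ 2 = s := ⟨_, rfl⟩
  obtain ⟨m, hm⟩ : ∃ m, ∑ i, p i * A.mulVec p i = m := ⟨_, rfl⟩
  rw [hs] at hs0
  -- With these `c` and `d` the matrix `s A - p wᵀ - w pᵀ + d p pᵀ - c I` is `s PAP - c P`.
  obtain ⟨c, hc⟩ : ∃ c, c = (s * A.trace - m) / ((n : ℝ) - 1) := ⟨_, rfl⟩
  obtain ⟨d, hd⟩ : ∃ d, d = (m + c) / s := ⟨_, rfl⟩
  have key := sum_sq_expand A hA p (A.mulVec p) (fun i => rfl) s m c d hs hm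
  have hnn : 0 ≤ ∑ i, ∑ j, (s * A i j - p i * A.mulVec p j - A.mulVec p i * p j
      + d * (p i * p j) - c * (if i = j then 1 else 0)) ^ 2 :=
    Finset.sum_nonneg fun i _ => Finset.sum_nonneg fun j _ => sq_nonneg _
  rw [key] at hnn
  rw [hs, hm]
  have hds : d * s = m + c := by rw [hd]; field_simp
  have hcn : c * ((n : ℝ) - 1) = s * A.trace - m := by rw [hc]; field_simp
  have hT : (s * A.trace - m) ^ 2 / ((n : ℝ) - 1) = c * (s * A.trace - m) := by
    rw [hc]; ring
  rw [hT]
  linear_combination hnn + c * hcn + (d * s - m - c) * hds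

/-- For `n ≥ 2`, `Ω ⊆ ℝⁿ` open and `v` twice continuously differentiable on `Ω`,
at every point of `Ω` one has
`|Dv|⁴ |D²v|² ≥ 2 |Dv|² |D²v Dv|² + (|Dv|² Δv − Δ_∞ v)²/(n−1) − (Δ_∞ v)²`. -/
theorem fundamental_inequality (n : ℕ) (hn : 2 ≤ n) (Ω : Set (Fin n → ℝ)) (hΩ : IsOpen Ω)
    (v : (Fin n → ℝ) → ℝ) (hv : ContDiffOn ℝ 2 v Ω) (x : Fin n → ℝ) (hx : x ∈ Ω) :
    (∑ i, grad v x i ^ 2) ^ 2 * (∑ i, ∑ j, hess v x i j ^ 2) ≥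
      2 * (∑ i, grad v x i ^ 2) * (∑ i, ((hess v x).mulVec (grad v x) i) ^ 2)
        + ((∑ i, grad v x i ^ 2) * (hess v x).trace
            - ∑ i, grad v x i * (hess v x).mulVec (grad v x) i) ^ 2 / ((n : ℝ) - 1)
        - (∑ i, grad v x i * (hess v x).mulVec (grad v x) i) ^ 2 := by
  exact matrix_inequality hn _ (hess_symm (hv.contDiffAt (hΩ.mem_nhds hx))) _
end

section
/- Let n ≥ 2, 1 < p < ∞, ε > 0, s ∈ ℝ, let U ⊆ ℝⁿ be open, and let u be a smooth function on U satisfying the regularized p-Laplace equation div((|Du|² + ε)^{(p−2)/2} Du) = 0 pointwise in U. Set μ := (|Du|² + ε)^{1/2}. Then there exists a constant C = C(p) > 0 such that for every η > 0 and every smooth compactly supported function φ with support contained in U, ∫_U |D²u|² μ^{p−2+s} φ² dx + (p−2+s−η) ∫_U |D²u Du|² μ^{p−4+s} φ² dx + (s(p−2)−η) ∫_U (Δ_∞u)² μ^{p−6+s} φ² dx ≤ (C/η) ∫_U μ^{p+s} |Dφ|² dx. -/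
/-- `μ := (|Du|² + ε)^{1/2}`. -/
noncomputable def mu {n : ℕ} (ε : ℝ) (u : (Fin n → ℝ) → ℝ) (x : Fin n → ℝ) : ℝ :=
  Real.sqrt ((∑ i, grad u x i ^ 2) + ε)

/-- The regularized `p`-Laplace equation `div((|Du|² + ε)^{(p−2)/2} Du) = 0` holds pointwise
in `U`. -/
def RegularizedPLaplace {n : ℕ} (p ε : ℝ) (u : (Fin n → ℝ) → ℝ) (U : Set (Fin n → ℝ)) : Prop :=
  ∀ x ∈ U, ∑ i, fderiv ℝ
      (fun y => ((∑ j, grad u y j ^ 2) + ε) ^ ((p - 2) / 2) * grad u y i) x (Pi.single i 1) = 0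

/-! ### Integration against compactly supported functions -/

open MeasureTheory in
/-- A function continuous on `U` times a continuous function compactly supported in `U` is
integrable. -/
lemma integrable_mul_of_tsupport_subset {n : ℕ} {U : Set (Fin n → ℝ)} {F ψ : (Fin n → ℝ) → ℝ}
    (hF : ContinuousOn F U) (hψ : Continuous ψ) (hc : HasCompactSupport ψ) (hs : tsupport ψ ⊆ U) :
    Integrable (fun x => F x * ψ x) := by
  have h1 : IntegrableOn (fun x => F x * ψ x) (tsupport ψ) :=
    ((hF.mono hs).mul hψ.continuousOn).integrableOn_compact hc
  refine (integrableOn_iff_integrable_of_support_subset ?_).1 h1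
  intro x hx
  refine subset_tsupport _ ?_
  intro h0
  exact hx (by simp [h0])

open MeasureTheory in
/-- Divergence theorem for the field `A ψ`, one component at a time: `A` is only regular on `U`,
and `ψ` is compactly supported there. -/
lemma integrable_and_integral_deriv_mul_eq_zero {n : ℕ} {U : Set (Fin n → ℝ)} (hU : IsOpen U)
    {A ψ : (Fin n → ℝ) → ℝ} (hA : ContDiffOn ℝ (⊤ : ℕ∞) A U) (hψ : ContDiff ℝ (⊤ : ℕ∞) ψ)
    (hc : HasCompactSupport ψ) (hs : tsupport ψ ⊆ U) (v : Fin n → ℝ) :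
    Integrable (fun x => fderiv ℝ A x v * ψ x + A x * fderiv ℝ ψ x v) ∧
      ∫ x in U, (fderiv ℝ A x v * ψ x + A x * fderiv ℝ ψ x v) = 0 := by
  have hA' : ContinuousOn (fun x => fderiv ℝ A x v) U :=
    (hA.continuousOn_fderiv_of_isOpen hU (by simp)).clm_apply continuousOn_const
  have hψ' : Continuous (fun x => fderiv ℝ ψ x v) :=
    (hψ.continuous_fderiv (by simp)).clm_apply continuous_const
  have hs' : tsupport (fun x => fderiv ℝ ψ x v) ⊆ tsupport ψ := tsupport_fderiv_apply_subset ℝ v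
  have hc' : HasCompactSupport (fun x => fderiv ℝ ψ x v) := hc.of_isClosed_subset
    (isClosed_tsupport _) hs'
  have i1 := integrable_mul_of_tsupport_subset hA' hψ.continuous hc hs
  have i2 := integrable_mul_of_tsupport_subset hA.continuousOn hψ' hc' (hs'.trans hs)
  have i3 := integrable_mul_of_tsupport_subset hA.continuousOn hψ.continuous hc hs
  refine ⟨i1.add i2, ?_⟩
  have key := integral_bilinear_fderiv_right_eq_neg_left_of_integrable (μ := volume)
    (B := ContinuousLinearMap.mul ℝ ℝ) (f := A) (g := ψ) (v := v) i1 i2 i3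
    (fun x hx => (hA.contDiffAt (hU.mem_nhds (hs hx))).differentiableAt (by simp))
    (fun x _ => hψ.differentiable (by simp) x)
  simp only [ContinuousLinearMap.mul_apply'] at key
  rw [setIntegral_eq_integral_of_forall_compl_eq_zero, integral_add i1 i2, key, add_neg_cancel]
  intro x hx
  have h1 : ψ x = 0 := image_eq_zero_of_notMem_tsupport fun h => hx (hs h)
  have h2 : fderiv ℝ ψ x = 0 := fderiv_of_notMem_tsupport ℝ fun h => hx (hs h)
  simp [h1, h2]

/-! ### Derivatives of weighted fields -/

lemma hasFDerivAt_normSq_rpow {n : ℕ} {g : Fin n → (Fin n → ℝ) → ℝ} {x : Fin n → ℝ} {ε : ℝ}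
    (hε : 0 < ε) (hg : ∀ i, DifferentiableAt ℝ (g i) x) (r : ℝ) :
    HasFDerivAt (fun y => ((∑ j, g j y ^ 2) + ε) ^ r)
      ((r * ((∑ j, g j x ^ 2) + ε) ^ (r - 1)) • ∑ j, (2 * g j x) • fderiv ℝ (g j) x) x := by
  have hm : HasFDerivAt (fun y => (∑ j, g j y ^ 2) + ε)
      (∑ j, (2 * g j x) • fderiv ℝ (g j) x) x := by
    refine HasFDerivAt.add_const _ (HasFDerivAt.fun_sum fun j _ => ?_)
    simpa using (hg j).hasFDerivAt.pow 2
  refine hm.rpow_const (Or.inl ?_)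
  have : 0 ≤ ∑ j, g j x ^ 2 := Finset.sum_nonneg fun j _ => sq_nonneg _
  positivity

/-- The divergence of `(|g|² + ε)^r (H g - (tr H) g)` for a vector field `g` and a matrix field
`H`. -/
lemma div_weighted_field {n : ℕ} {g : Fin n → (Fin n → ℝ) → ℝ}
    {H : Fin n → Fin n → (Fin n → ℝ) → ℝ} {x : Fin n → ℝ} {ε : ℝ}
    (hε : 0 < ε) (hg : ∀ i, DifferentiableAt ℝ (g i) x)
    (hH : ∀ i j, DifferentiableAt ℝ (H i j) x) (r : ℝ) (e : Fin n → Fin n → ℝ) :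
    ∑ i, fderiv ℝ (fun y => (∑ j, H i j y * g j y - (∑ j, H j j y) * g i y)
        * ((∑ j, g j y ^ 2) + ε) ^ r) x (e i)
      = ((∑ j, g j x ^ 2) + ε) ^ r *
          (∑ i, ∑ j, fderiv ℝ (H i j) x (e i) * g j x
            + ∑ i, ∑ j, H i j x * fderiv ℝ (g j) x (e i)
            - ∑ i, ∑ j, fderiv ℝ (H j j) x (e i) * g i x
            - (∑ j, H j j x) * ∑ i, fderiv ℝ (g i) x (e i))
        + 2 * r * ((∑ j, g j x ^ 2) + ε) ^ (r - 1) *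
          ∑ i, (∑ j, H i j x * g j x - (∑ j, H j j x) * g i x)
            * ∑ j, g j x * fderiv ℝ (g j) x (e i) := by
  have hd : ∀ i, HasFDerivAt (fun y => (∑ j, H i j y * g j y - (∑ j, H j j y) * g i y)
        * ((∑ j, g j y ^ 2) + ε) ^ r) _ x := fun i =>
    ((HasFDerivAt.fun_sum fun j _ => (hH i j).hasFDerivAt.fun_mul (hg j).hasFDerivAt).fun_sub
      ((HasFDerivAt.fun_sum fun j _ => (hH j j).hasFDerivAt).fun_mul (hg i).hasFDerivAt)).fun_mul
      (hasFDerivAt_normSq_rpow hε hg r)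
  have hi : ∀ i, fderiv ℝ (fun y => (∑ j, H i j y * g j y - (∑ j, H j j y) * g i y)
        * ((∑ j, g j y ^ 2) + ε) ^ r) x (e i)
      = ((∑ j, g j x ^ 2) + ε) ^ r *
          (∑ j, fderiv ℝ (H i j) x (e i) * g j x + ∑ j, H i j x * fderiv ℝ (g j) x (e i)
            - ∑ j, fderiv ℝ (H j j) x (e i) * g i x
            - (∑ j, H j j x) * fderiv ℝ (g i) x (e i))
        + 2 * r * ((∑ j, g j x ^ 2) + ε) ^ (r - 1) *
          ((∑ j, H i j x * g j x - (∑ j, H j j x) * g i x)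
            * ∑ j, g j x * fderiv ℝ (g j) x (e i)) := by
    intro i
    rw [(hd i).fderiv]
    simp only [add_apply, sub_apply, smul_apply, sum_apply, smul_eq_mul]
    have s1 : ∑ j, 2 * g j x * fderiv ℝ (g j) x (e i)
        = 2 * ∑ j, g j x * fderiv ℝ (g j) x (e i) := by
      simp only [Finset.mul_sum, mul_assoc]
    have s2 : ∑ j, (H i j x * fderiv ℝ (g j) x (e i) + g j x * fderiv ℝ (H i j) x (e i))
        = ∑ j, H i j x * fderiv ℝ (g j) x (e i) + ∑ j, fderiv ℝ (H i j) x (e i) * g j x := by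
      simp only [Finset.sum_add_distrib, mul_comm (g _ x)]
    rw [s1, s2, ← Finset.sum_mul]
    ring
  rw [Finset.sum_congr rfl fun i _ => hi i, Finset.sum_add_distrib, ← Finset.mul_sum,
    ← Finset.mul_sum, Finset.sum_sub_distrib, Finset.sum_sub_distrib, Finset.sum_add_distrib,
    ← Finset.mul_sum]

/-! ### Differential identities for `u` -/

/-- Symmetry of second derivatives, in terms of iterated partial derivatives. -/
lemma fderiv_fderiv_apply_comm {n : ℕ} {f : (Fin n → ℝ) → ℝ} {x : Fin n → ℝ}
    (hf : ContDiffAt ℝ (⊤ : ℕ∞) f x) (v w : Fin n → ℝ) :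
    fderiv ℝ (fun y => fderiv ℝ f y v) x w = fderiv ℝ (fun y => fderiv ℝ f y w) x v := by
  have hd : DifferentiableAt ℝ (fderiv ℝ f) x :=
    (hf.fderiv_right (m := 1) (by norm_cast)).differentiableAt (by simp)
  have hs : IsSymmSndFDerivAt ℝ f x := hf.isSymmSndFDerivAt (by simp; norm_cast)
  have h : ∀ v, fderiv ℝ (fun y => fderiv ℝ f y v) x = (fderiv ℝ (fderiv ℝ f) x).flip v := by
    intro v
    have := hd.hasFDerivAt.clm_apply (hasFDerivAt_const v x)
    rw [this.fderiv]
    ext w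
    simp
  rw [h, h]
  exact hs w v

lemma ContDiffOn.fderiv_apply_smooth {n : ℕ} {f : (Fin n → ℝ) → ℝ} {U : Set (Fin n → ℝ)}
    (hU : IsOpen U) (hf : ContDiffOn ℝ (⊤ : ℕ∞) f U) (v : Fin n → ℝ) :
    ContDiffOn ℝ (⊤ : ℕ∞) (fun y => fderiv ℝ f y v) U :=
  (hf.fderiv_of_isOpen hU (by simp)).clm_apply contDiffOn_const

lemma hess_symm_s10 {n : ℕ} {u : (Fin n → ℝ) → ℝ} {U : Set (Fin n → ℝ)} (hU : IsOpen U)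
    (hu : ContDiffOn ℝ (⊤ : ℕ∞) u U) {x : Fin n → ℝ} (hx : x ∈ U) (i j : Fin n) :
    hess u x i j = hess u x j i :=
  fderiv_fderiv_apply_comm (hu.contDiffAt (hU.mem_nhds hx)) _ _

/-- `∂ᵢ(∂ᵢ∂ⱼu) = ∂ⱼ(∂ᵢ∂ᵢu)`: the commutation behind the cancellation of third derivatives. -/
lemma third_symm {n : ℕ} {u : (Fin n → ℝ) → ℝ} {U : Set (Fin n → ℝ)} (hU : IsOpen U)
    (hu : ContDiffOn ℝ (⊤ : ℕ∞) u U) {x : Fin n → ℝ} (hx : x ∈ U) (i j : Fin n) :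
    fderiv ℝ (fun y => hess u y i j) x (Pi.single i 1)
      = fderiv ℝ (fun y => hess u y i i) x (Pi.single j 1) := by
  have h1 : (fun y => hess u y i j) =ᶠ[nhds x] fun y => hess u y j i := by
    filter_upwards [hU.mem_nhds hx] with y hy using hess_symm_s10 hU hu hy i j
  rw [h1.fderiv_eq]
  exact fderiv_fderiv_apply_comm
    ((hu.fderiv_apply_smooth hU (Pi.single i 1)).contDiffAt (hU.mem_nhds hx)) _ _

/-- Bochner-type identity: the third derivatives of `u` cancel in the divergence of
`(|Du|² + ε)^r (D²u Du - Δu Du)`. -/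
lemma div_identity {n : ℕ} {u : (Fin n → ℝ) → ℝ} {U : Set (Fin n → ℝ)} (hU : IsOpen U)
    (hu : ContDiffOn ℝ (⊤ : ℕ∞) u U) {x : Fin n → ℝ} (hx : x ∈ U) {ε : ℝ} (hε : 0 < ε) (r : ℝ) :
    ∑ i, fderiv ℝ (fun y => ((hess u y).mulVec (grad u y) i - (∑ j, hess u y j j) * grad u y i)
        * ((∑ j, grad u y j ^ 2) + ε) ^ r) x (Pi.single i 1)
      = ((∑ j, grad u x j ^ 2) + ε) ^ r *
          (∑ i, ∑ j, hess u x i j ^ 2 - (∑ j, hess u x j j) ^ 2)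
        + 2 * r * ((∑ j, grad u x j ^ 2) + ε) ^ (r - 1) *
          (∑ i, (hess u x).mulVec (grad u x) i ^ 2 - (∑ j, hess u x j j) *
            ∑ i, grad u x i * (hess u x).mulVec (grad u x) i) := by
  have hg : ∀ i, ContDiffOn ℝ (⊤ : ℕ∞) (fun y => grad u y i) U := fun i =>
    hu.fderiv_apply_smooth hU _
  have hH : ∀ i j, ContDiffOn ℝ (⊤ : ℕ∞) (fun y => hess u y i j) U := fun i j =>
    (hg j).fderiv_apply_smooth hU _
  have key := div_weighted_field (g := fun i y => grad u y i) (H := fun i j y => hess u y i j)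
    hε (fun i => ((hg i).contDiffAt (hU.mem_nhds hx)).differentiableAt (by simp))
    (fun i j => ((hH i j).contDiffAt (hU.mem_nhds hx)).differentiableAt (by simp)) r
    (fun i => Pi.single i 1)
  have hh : ∀ i j, fderiv ℝ (fun y => grad u y j) x (Pi.single i 1) = hess u x i j :=
    fun _ _ => rfl
  have hv : ∀ y i, (hess u y).mulVec (grad u y) i = ∑ j, hess u y i j * grad u y j :=
    fun _ _ => rfl
  simp only [hh] at key
  simp only [hv]
  refine key.trans ?_
  have h3 : ∑ i, ∑ j, fderiv ℝ (fun y => hess u y i j) x (Pi.single i 1) * grad u x j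
      = ∑ i, ∑ j, fderiv ℝ (fun y => hess u y j j) x (Pi.single i 1) * grad u x i := by
    rw [Finset.sum_comm]
    exact Finset.sum_congr rfl fun j _ => Finset.sum_congr rfl fun i _ => by
      rw [third_symm hU hu hx i j]
  have h4 : ∀ i, ∑ j, grad u x j * hess u x i j = ∑ j, hess u x i j * grad u x j :=
    fun i => Finset.sum_congr rfl fun j _ => mul_comm _ _
  rw [h3]
  simp only [h4, sub_mul, Finset.sum_sub_distrib, pow_two, mul_assoc, ← Finset.mul_sum]
  ring

/-- The regularized equation in nondivergence form: `μ² Δu + (p - 2) Δ_∞u = 0`. -/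
lemma nondivergence_form {n : ℕ} {p ε : ℝ} {u : (Fin n → ℝ) → ℝ} {U : Set (Fin n → ℝ)}
    (hU : IsOpen U) (hu : ContDiffOn ℝ (⊤ : ℕ∞) u U) (hε : 0 < ε)
    (heq : RegularizedPLaplace p ε u U) {x : Fin n → ℝ} (hx : x ∈ U) :
    ((∑ j, grad u x j ^ 2) + ε) * (∑ j, hess u x j j)
      + (p - 2) * ∑ i, grad u x i * (hess u x).mulVec (grad u x) i = 0 := by
  have hg : ∀ i, DifferentiableAt ℝ (fun y => grad u y i) x := fun i =>
    ((hu.fderiv_apply_smooth hU _).contDiffAt (hU.mem_nhds hx)).differentiableAt (by simp)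
  have h := heq x hx
  have hd : ∀ i, HasFDerivAt
      (fun y => ((∑ j, grad u y j ^ 2) + ε) ^ ((p - 2) / 2) * grad u y i) _ x := fun i =>
    (hasFDerivAt_normSq_rpow (g := fun i y => grad u y i) hε hg ((p - 2) / 2)).mul
      (hg i).hasFDerivAt
  simp only [fun i => (hd i).fderiv] at h
  simp only [add_apply, smul_apply, sum_apply, smul_eq_mul] at h
  have hh : ∀ i j, fderiv ℝ (fun y => grad u y j) x (Pi.single i 1) = hess u x i j :=
    fun _ _ => rfl
  have hv : ∀ i, (hess u x).mulVec (grad u x) i = ∑ j, hess u x i j * grad u x j :=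
    fun _ => rfl
  simp only [hh] at h
  have hm : 0 < (∑ j, grad u x j ^ 2) + ε := by
    have : 0 ≤ ∑ j, grad u x j ^ 2 := Finset.sum_nonneg fun j _ => sq_nonneg _
    positivity
  have hv2 : ∀ i, ∑ j, 2 * grad u x j * hess u x i j = 2 * (hess u x).mulVec (grad u x) i := by
    intro i
    rw [hv, Finset.mul_sum]
    exact Finset.sum_congr rfl fun j _ => by ring
  simp only [hv2] at h
  generalize hM : (∑ j, grad u x j ^ 2) + ε = M at h hm ⊢
  have hp : M ^ ((p - 2) / 2) = M ^ ((p - 2) / 2 - 1) * M := by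
    rw [Real.rpow_sub_one hm.ne']; field_simp
  have hpos : 0 < M ^ ((p - 2) / 2 - 1) := Real.rpow_pos_of_pos hm _
  rw [hp] at h
  generalize M ^ ((p - 2) / 2 - 1) = B at h hpos
  have h' : B * (M * (∑ j, hess u x j j)
      + (p - 2) * ∑ i, grad u x i * (hess u x).mulVec (grad u x) i) = 0 := by
    rw [← h, mul_add]
    simp only [Finset.mul_sum, ← Finset.sum_add_distrib]
    exact Finset.sum_congr rfl fun j _ => by ring
  exact (mul_eq_zero.1 h').resolve_left hpos.ne'

/-! ### The pointwise inequality -/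

/-- The algebraic core. Here `M = μ²`, `g = Du`, `w = D²u Du`, `d = Dφ`, `f = φ`, `L = Δu`,
`h = |D²u|²`, `q = p - 2 + s`, and the common factor `μ^{q-4}` is divided out. The left side minus
the divergence is estimated by completing two squares. -/
lemma pointwise_algebra {n : ℕ} {p s η M L h f : ℝ} {g w d : Fin n → ℝ} (hη : 0 < η) (hM : 0 < M)
    (hg : ∑ i, g i ^ 2 ≤ M) (hL : M * L + (p - 2) * ∑ i, g i * w i = 0) :
    h * M ^ 2 * f ^ 2 + (p - 2 + s - η) * ((∑ i, w i ^ 2) * M * f ^ 2)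
        + (s * (p - 2) - η) * ((∑ i, g i * w i) ^ 2 * f ^ 2)
      ≤ (1 + (p - 2) ^ 2) / η * (M ^ 3 * ∑ i, d i ^ 2)
        + ((M ^ 2 * (h - L ^ 2) + (p - 2 + s) * M * (∑ i, w i ^ 2 - L * ∑ i, g i * w i)) * f ^ 2
          + M ^ 2 * (2 * f * (∑ i, w i * d i - L * ∑ i, g i * d i))) := by
  have hR : 0 ≤ ∑ i, d i ^ 2 := Finset.sum_nonneg fun i _ => sq_nonneg _
  have hG : (∑ i, g i * d i) ^ 2 ≤ M * ∑ i, d i ^ 2 :=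
    (Finset.sum_mul_sq_le_sq_mul_sq _ _ _).trans (mul_le_mul_of_nonneg_right hg hR)
  have hP : 0 ≤ η ^ 2 * f ^ 2 * ∑ i, w i ^ 2 + 2 * η * f * M * ∑ i, w i * d i
      + M ^ 2 * ∑ i, d i ^ 2 := by
    have : 0 ≤ ∑ i, (η * f * w i + M * d i) ^ 2 := Finset.sum_nonneg fun i _ => sq_nonneg _
    convert this using 1
    simp only [Finset.mul_sum, ← Finset.sum_add_distrib]
    exact Finset.sum_congr rfl fun j _ => by ring
  generalize ∑ i, g i * w i = D at *
  generalize ∑ i, w i ^ 2 = N at *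
  generalize ∑ i, w i * d i = P at *
  generalize ∑ i, g i * d i = G at *
  generalize ∑ i, d i ^ 2 = R at *
  have hL' : M * L = -((p - 2) * D) := by linarith
  have h1 : 0 ≤ (M * (η ^ 2 * f ^ 2 * N + 2 * η * f * M * P + M ^ 2 * R)
      + ((η * D * f + (p - 2) * M * G) ^ 2 + (p - 2) ^ 2 * M ^ 2 * (M * R - G ^ 2))) / η := by
    have := sub_nonneg.2 hG
    positivity
  have h2 : (M * (η ^ 2 * f ^ 2 * N + 2 * η * f * M * P + M ^ 2 * R)
      + ((η * D * f + (p - 2) * M * G) ^ 2 + (p - 2) ^ 2 * M ^ 2 * (M * R - G ^ 2))) / η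
      = (1 + (p - 2) ^ 2) / η * (M ^ 3 * R) + η * M * f ^ 2 * N + 2 * f * M ^ 2 * P
        + η * D ^ 2 * f ^ 2 + 2 * (p - 2) * f * M * D * G := by
    field_simp
    ring
  rw [h2] at h1
  linear_combination h1 - (-f ^ 2 * (M * L - (p - 2) * D) - (p - 2 + s) * D * f ^ 2
    - 2 * M * f * G) * hL'

lemma mu_rpow {n : ℕ} {ε : ℝ} (hε : 0 < ε) (u : (Fin n → ℝ) → ℝ) (x : Fin n → ℝ) (q : ℝ) :
    mu ε u x ^ q = ((∑ j, grad u x j ^ 2) + ε) ^ (q / 2) := by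
  have : 0 ≤ ∑ j, grad u x j ^ 2 := Finset.sum_nonneg fun j _ => sq_nonneg _
  rw [mu, Real.sqrt_eq_rpow, ← Real.rpow_mul (by positivity)]
  congr 1
  ring

/-- The Caccioppoli inequality before integration: it holds pointwise up to the divergence of the
field `φ² μ^{p-2+s} (D²u Du - Δu Du)`. -/
lemma pointwise_estimate {n : ℕ} {p ε s η : ℝ} {u φ : (Fin n → ℝ) → ℝ} {U : Set (Fin n → ℝ)}
    (hU : IsOpen U) (hu : ContDiffOn ℝ (⊤ : ℕ∞) u U) (hε : 0 < ε) (hη : 0 < η)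
    (heq : RegularizedPLaplace p ε u U) (hφ : ContDiff ℝ (⊤ : ℕ∞) φ)
    {x : Fin n → ℝ} (hx : x ∈ U) :
    (∑ i, ∑ j, hess u x i j ^ 2) * mu ε u x ^ (p - 2 + s) * φ x ^ 2
        + (p - 2 + s - η) * ((∑ i, ((hess u x).mulVec (grad u x) i) ^ 2)
            * mu ε u x ^ (p - 4 + s) * φ x ^ 2)
        + (s * (p - 2) - η) * ((∑ i, grad u x i * (hess u x).mulVec (grad u x) i) ^ 2
            * mu ε u x ^ (p - 6 + s) * φ x ^ 2)
      ≤ (1 + (p - 2) ^ 2) / η * (mu ε u x ^ (p + s)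
          * (∑ i, (fderiv ℝ φ x (Pi.single i 1)) ^ 2))
        + ∑ i, (fderiv ℝ (fun y =>
            ((hess u y).mulVec (grad u y) i - (∑ j, hess u y j j) * grad u y i)
            * ((∑ j, grad u y j ^ 2) + ε) ^ ((p - 2 + s) / 2)) x (Pi.single i 1) * φ x ^ 2
          + (((hess u x).mulVec (grad u x) i - (∑ j, hess u x j j) * grad u x i)
            * ((∑ j, grad u x j ^ 2) + ε) ^ ((p - 2 + s) / 2))
            * fderiv ℝ (fun y => φ y ^ 2) x (Pi.single i 1)) := by
  have hm : 0 < (∑ j, grad u x j ^ 2) + ε := by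
    have : 0 ≤ ∑ j, grad u x j ^ 2 := Finset.sum_nonneg fun j _ => sq_nonneg _
    positivity
  have hφ2 : ∀ i : Fin n, fderiv ℝ (fun y => φ y ^ 2) x (Pi.single i 1)
      = 2 * φ x * fderiv ℝ φ x (Pi.single i 1) := by
    intro i
    have : HasFDerivAt (fun y => φ y ^ 2) _ x :=
      (hφ.differentiable (by simp) x).hasFDerivAt.pow 2
    rw [this.fderiv]
    simp
  have halg := pointwise_algebra (s := s) (h := ∑ i, ∑ j, hess u x i j ^ 2) (f := φ x)
    (g := grad u x) (w := (hess u x).mulVec (grad u x)) (d := fun i => fderiv ℝ φ x (Pi.single i 1))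
    hη hm (by linarith) (nondivergence_form hU hu hε heq hx)
  rw [Finset.sum_add_distrib, ← Finset.sum_mul, div_identity hU hu hx hε]
  simp only [hφ2, mu_rpow hε]
  have hsum : ∀ c : ℝ, ∑ i, ((hess u x).mulVec (grad u x) i - (∑ j, hess u x j j) * grad u x i)
      * c * (2 * φ x * fderiv ℝ φ x (Pi.single i 1))
      = c * (2 * φ x * (∑ i, (hess u x).mulVec (grad u x) i * fderiv ℝ φ x (Pi.single i 1)
        - (∑ j, hess u x j j) * ∑ i, grad u x i * fderiv ℝ φ x (Pi.single i 1))) := by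
    intro c
    rw [Finset.mul_sum (a := ∑ j, hess u x j j), ← Finset.sum_sub_distrib, Finset.mul_sum,
      Finset.mul_sum]
    exact Finset.sum_congr rfl fun j _ => by ring
  rw [hsum]
  generalize (∑ j, grad u x j ^ 2) + ε = M at halg hm ⊢
  -- Every power of `μ² = M` is `M ^ ((p - 6 + s) / 2)` times a natural power of `M`.
  have e1 : M ^ ((p - 4 + s) / 2) = M ^ ((p - 6 + s) / 2) * M := by
    rw [← Real.rpow_add_one hm.ne']; ring_nf
  have e1' : M ^ ((p - 2 + s) / 2 - 1) = M ^ ((p - 6 + s) / 2) * M := by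
    rw [← Real.rpow_add_one hm.ne']; ring_nf
  have e2 : M ^ ((p - 2 + s) / 2) = M ^ ((p - 6 + s) / 2) * M ^ 2 := by
    rw [← Real.rpow_add_natCast hm.ne']; ring_nf
  have e3 : M ^ ((p + s) / 2) = M ^ ((p - 6 + s) / 2) * M ^ 3 := by
    rw [← Real.rpow_add_natCast hm.ne']; ring_nf
  rw [e1, e1', e2, e3]
  have hB : 0 ≤ M ^ ((p - 6 + s) / 2) := Real.rpow_nonneg hm.le _
  generalize M ^ ((p - 6 + s) / 2) = B at hB ⊢
  refine le_of_eq_of_le ?_ ((mul_le_mul_of_nonneg_left halg hB).trans_eq ?_)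
  · ring
  · ring

/-! ### Integration -/

open MeasureTheory in
/-- Integration of a pointwise inequality that holds up to terms `F i` of vanishing integral. -/
lemma integral_estimate_of_pointwise {n : ℕ} {U : Set (Fin n → ℝ)} (hU : MeasurableSet U)
    {a b c d : (Fin n → ℝ) → ℝ} {F : Fin n → (Fin n → ℝ) → ℝ} {k l m : ℝ}
    (ha : IntegrableOn a U) (hb : IntegrableOn b U) (hc : IntegrableOn c U)
    (hd : IntegrableOn d U) (hF : ∀ i, IntegrableOn (F i) U) (hF0 : ∀ i, ∫ x in U, F i x = 0)
    (h : ∀ x ∈ U, a x + k * b x + l * c x ≤ m * d x + ∑ i, F i x) :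
    (∫ x in U, a x) + k * (∫ x in U, b x) + l * (∫ x in U, c x) ≤ m * ∫ x in U, d x := by
  have hb' : IntegrableOn (fun x => k * b x) U := hb.const_mul k
  have hc' : IntegrableOn (fun x => l * c x) U := hc.const_mul l
  have hd' : IntegrableOn (fun x => m * d x) U := hd.const_mul m
  have hab : IntegrableOn (fun x => a x + k * b x) U := ha.add hb'
  have hS : IntegrableOn (fun x => ∑ i, F i x) U := integrable_finsetSum _ fun i _ => hF i
  have hmono := setIntegral_mono_on (hab.add hc') (hd'.add hS) hU h
  simp only [Pi.add_apply] at hmono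
  rw [integral_add hab hc', integral_add ha hb', integral_add hd' hS,
    integral_finsetSum _ fun i _ => hF i, Finset.sum_eq_zero fun i _ => hF0 i] at hmono
  simpa only [integral_const_mul, add_zero] using hmono

/-- Caccioppoli estimate: there is `C = C(p) > 0` such that for every `η > 0`
and every smooth compactly supported `φ` with support in `U`,
`∫_U |D²u|² μ^{p−2+s} φ² + (p−2+s−η) ∫_U |D²u Du|² μ^{p−4+s} φ²
  + (s(p−2)−η) ∫_U (Δ_∞u)² μ^{p−6+s} φ² ≤ (C/η) ∫_U μ^{p+s} |Dφ|²`. -/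
theorem caccioppoli_estimate (p : ℝ) (hp : 1 < p) :
    ∃ C > 0, ∀ (n : ℕ), 2 ≤ n → ∀ (ε : ℝ), 0 < ε → ∀ (s : ℝ),
      ∀ (U : Set (Fin n → ℝ)), IsOpen U →
      ∀ (u : (Fin n → ℝ) → ℝ), ContDiffOn ℝ (⊤ : ℕ∞) u U →
      RegularizedPLaplace p ε u U →
      ∀ (η : ℝ), 0 < η →
      ∀ (φ : (Fin n → ℝ) → ℝ), ContDiff ℝ (⊤ : ℕ∞) φ → HasCompactSupport φ →
        tsupport φ ⊆ U →
      (∫ x in U, (∑ i, ∑ j, hess u x i j ^ 2) * mu ε u x ^ (p - 2 + s) * φ x ^ 2)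
        + (p - 2 + s - η) * (∫ x in U, (∑ i, ((hess u x).mulVec (grad u x) i) ^ 2)
            * mu ε u x ^ (p - 4 + s) * φ x ^ 2)
        + (s * (p - 2) - η) * (∫ x in U,
            (∑ i, grad u x i * (hess u x).mulVec (grad u x) i) ^ 2
            * mu ε u x ^ (p - 6 + s) * φ x ^ 2)
      ≤ (C / η) * ∫ x in U, mu ε u x ^ (p + s)
          * (∑ i, (fderiv ℝ φ x (Pi.single i 1)) ^ 2) := by
  refine ⟨1 + (p - 2) ^ 2, by positivity, ?_⟩
  intro n _ ε hε s U hU u hu heq η hη φ hφ hφc hφs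
  have hg : ∀ i, ContDiffOn ℝ (⊤ : ℕ∞) (fun y => grad u y i) U := fun i =>
    hu.fderiv_apply_smooth hU _
  have hH : ∀ i j, ContDiffOn ℝ (⊤ : ℕ∞) (fun y => hess u y i j) U := fun i j =>
    (hg j).fderiv_apply_smooth hU _
  have hHg : ∀ i, ContDiffOn ℝ (⊤ : ℕ∞) (fun y => (hess u y).mulVec (grad u y) i) U := by
    intro i
    have : ContDiffOn ℝ (⊤ : ℕ∞) (fun y => ∑ j, hess u y i j * grad u y j) U :=
      ContDiffOn.sum fun j _ => (hH i j).mul (hg j)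
    exact this
  have hm : ∀ r : ℝ, ContDiffOn ℝ (⊤ : ℕ∞) (fun y => ((∑ j, grad u y j ^ 2) + ε) ^ r) U := by
    intro r
    refine ContDiffOn.rpow_const_of_ne
      ((ContDiffOn.sum fun j _ => (hg j).pow 2).add contDiffOn_const) fun x _ => ?_
    have : 0 ≤ ∑ j, grad u x j ^ 2 := Finset.sum_nonneg fun j _ => sq_nonneg _
    positivity
  have hmu : ∀ q : ℝ, ContinuousOn (fun y => mu ε u y ^ q) U := by
    intro q
    simp only [mu_rpow hε]
    exact (hm _).continuousOn
  have hψ : ContDiff ℝ (⊤ : ℕ∞) (fun y => φ y ^ 2) := hφ.pow 2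
  have hψs' : tsupport (fun y => φ y ^ 2) ⊆ tsupport φ := by
    refine closure_mono fun x hx h0 => hx ?_
    simp [h0]
  have hψs := hψs'.trans hφs
  have hψc : HasCompactSupport (fun y => φ y ^ 2) :=
    hφc.of_isClosed_subset (isClosed_tsupport _) hψs'
  have hdiv := fun i : Fin n => integrable_and_integral_deriv_mul_eq_zero hU
    (((hHg i).sub ((ContDiffOn.sum (s := Finset.univ) fun j _ => hH j j).mul (hg i))).mul (hm ((p - 2 + s) / 2)))
    hψ hψc hψs (Pi.single i 1)
  have c1 : ContinuousOn (fun x => ∑ i, ∑ j, hess u x i j ^ 2) U :=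
    (ContDiffOn.sum fun i _ => ContDiffOn.sum fun j _ => (hH i j).pow 2).continuousOn
  have c2 : ContinuousOn (fun x => ∑ i, (hess u x).mulVec (grad u x) i ^ 2) U :=
    (ContDiffOn.sum fun i _ => (hHg i).pow 2).continuousOn
  have c3 : ContinuousOn
      (fun x => (∑ i, grad u x i * (hess u x).mulVec (grad u x) i) ^ 2) U :=
    ((ContDiffOn.sum fun i _ => (hg i).mul (hHg i)).pow 2).continuousOn
  have i1 := (integrable_mul_of_tsupport_subset (c1.mul (hmu (p - 2 + s)))
    hψ.continuous hψc hψs).integrableOn (s := U)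
  have i2 := (integrable_mul_of_tsupport_subset (c2.mul (hmu (p - 4 + s)))
    hψ.continuous hψc hψs).integrableOn (s := U)
  have i3 := (integrable_mul_of_tsupport_subset (c3.mul (hmu (p - 6 + s)))
    hψ.continuous hψc hψs).integrableOn (s := U)
  have hds : tsupport (fun x => ∑ i, (fderiv ℝ φ x (Pi.single i 1)) ^ 2) ⊆ tsupport φ := by
    refine closure_minimal (fun x hx => ?_) (isClosed_tsupport _)
    by_contra h
    exact hx (by simp [fderiv_of_notMem_tsupport ℝ h])
  have i4 := (integrable_mul_of_tsupport_subset (hmu (p + s))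
    (continuous_finsetSum _ fun i _ =>
      ((hφ.continuous_fderiv (by simp)).clm_apply continuous_const).pow 2)
    (hφc.of_isClosed_subset (isClosed_tsupport _) hds) (hds.trans hφs)).integrableOn (s := U)
  have i5 := fun i : Fin n => (hdiv i).1.integrableOn (s := U)
  exact integral_estimate_of_pointwise hU.measurableSet i1 i2 i3 i4 i5 (fun i => (hdiv i).2)
    fun x hx => pointwise_estimate hU hu hε hη heq hφ hx
end

section
/- Let n ≥ 2, 1 < p < ∞, ε > 0, s ∈ ℝ, let U ⊆ ℝⁿ be open, and let u be a smooth function on U satisfying the regularized p-Laplace equation div((|Du|² + ε)^{(p−2)/2} Du) = 0 pointwise in U. Set μ := (|Du|² + ε)^{1/2}. Then there exists a constant C = C(p, s) > 0 such that for every smooth compactly supported function φ with support contained in U, ∫_U |D²u|² μ^{p−2+s} φ² dx ≤ C ( ∫_U |D²u Du|² μ^{p−4+s} φ² dx + ∫_U μ^{p+s} |Dφ|² dx ). -/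
open MeasureTheory Filter Topology

/-! ### Partial derivatives -/

/-- The partial derivative of `f` in the `i`-th coordinate direction. With it, `grad u x i` unfolds
to `pd i u x` and `hess u x i j` to `pd i (pd j u) x`. -/
noncomputable def pd {n : ℕ} (i : Fin n) (f : (Fin n → ℝ) → ℝ) (x : Fin n → ℝ) : ℝ :=
  fderiv ℝ f x (Pi.single i 1)

section calculus

variable {n : ℕ} {U : Set (Fin n → ℝ)} {f g : (Fin n → ℝ) → ℝ} {x : Fin n → ℝ}

lemma pd_mul (i : Fin n) (hf : DifferentiableAt ℝ f x) (hg : DifferentiableAt ℝ g x) :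
    pd i (fun y => f y * g y) x = pd i f x * g x + f x * pd i g x := by
  unfold pd
  rw [fderiv_fun_mul hf hg]
  simp only [add_apply, smul_apply, smul_eq_mul]
  ring

lemma pd_sub (i : Fin n) (hf : DifferentiableAt ℝ f x) (hg : DifferentiableAt ℝ g x) :
    pd i (fun y => f y - g y) x = pd i f x - pd i g x := by
  unfold pd
  rw [fderiv_fun_sub hf hg]
  rfl

lemma pd_sum (i : Fin n) {F : Fin n → (Fin n → ℝ) → ℝ}
    (hF : ∀ j, DifferentiableAt ℝ (F j) x) :
    pd i (fun y => ∑ j, F j y) x = ∑ j, pd i (F j) x := by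
  unfold pd
  rw [fderiv_fun_sum fun j _ => hF j]
  simp

lemma pd_rpow (i : Fin n) (a : ℝ) (hf : DifferentiableAt ℝ f x) (h0 : f x ≠ 0) :
    pd i (fun y => f y ^ a) x = a * f x ^ (a - 1) * pd i f x := by
  unfold pd
  rw [(hf.hasFDerivAt.rpow_const (Or.inl h0)).fderiv]
  simp

lemma pd_contDiffOn (hU : IsOpen U) (i : Fin n) (hf : ContDiffOn ℝ (⊤ : ℕ∞) f U) :
    ContDiffOn ℝ (⊤ : ℕ∞) (pd i f) U :=
  (hf.fderiv_of_isOpen hU (m := ((⊤ : ℕ∞) : WithTop ℕ∞)) (by simp)).clm_apply contDiffOn_const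

lemma pd_comm (hU : IsOpen U) (hf : ContDiffOn ℝ (⊤ : ℕ∞) f U) (hx : x ∈ U) (i j : Fin n) :
    pd i (pd j f) x = pd j (pd i f) x := by
  have hat : ContDiffAt ℝ (⊤ : ℕ∞) f x := hf.contDiffAt (hU.mem_nhds hx)
  have hsym : IsSymmSndFDerivAt ℝ f x := hat.isSymmSndFDerivAt (by
    rw [minSmoothness_of_isRCLikeNormedField]; exact WithTop.coe_le_coe.mpr le_top)
  have hd : DifferentiableAt ℝ (fderiv ℝ f) x :=
    ((hf.fderiv_of_isOpen hU (m := ((⊤ : ℕ∞) : WithTop ℕ∞)) (by simp)).contDiffAt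
      (hU.mem_nhds hx)).differentiableAt (by simp)
  have key : ∀ a b : Fin n, pd a (pd b f) x
      = fderiv ℝ (fderiv ℝ f) x (Pi.single a 1) (Pi.single b 1) := by
    intro a b
    have : pd b f = fun y => fderiv ℝ f y (Pi.single b 1) := rfl
    rw [this]
    unfold pd
    rw [fderiv_clm_apply hd (differentiableAt_const _)]
    simp
  rw [key, key]
  exact hsym _ _

lemma pd_congr (i : Fin n) (h : f =ᶠ[𝓝 x] g) : pd i f x = pd i g x := by
  unfold pd
  rw [h.fderiv_eq]

/-! ### Integration of functions supported in a compact subset of `U` -/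

lemma integrable_of_zero_off {K : Set (Fin n → ℝ)} (hK : IsCompact K) (hKU : K ⊆ U)
    (hf : ContinuousOn f U) (h0 : ∀ y, y ∉ K → f y = 0) : Integrable f := by
  rw [← integrableOn_iff_integrable_of_support_subset (s := K)]
  · exact (hf.mono hKU).integrableOn_compact hK
  · intro y hy
    by_contra h
    exact hy (h0 y h)

/-- The integral of a partial derivative vanishes for a function that is smooth on `U` and zero off
a compact subset of `U`; outside `U` nothing but this vanishing is known. -/
lemma integral_pd_eq_zero {K : Set (Fin n → ℝ)} (hU : IsOpen U) (hK : IsCompact K) (hKU : K ⊆ U)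
    (hf : ContDiffOn ℝ (⊤ : ℕ∞) f U) (h0 : ∀ y, y ∉ K → f y = 0) (i : Fin n) :
    Integrable (pd i f) ∧ ∫ y in U, pd i f y = 0 := by
  have hev : ∀ y, y ∉ K → f =ᶠ[𝓝 y] fun _ => 0 := fun y hy =>
    Filter.mem_of_superset (hK.isClosed.isOpen_compl.mem_nhds hy) h0
  have hd : Differentiable ℝ f := by
    intro y
    by_cases hy : y ∈ K
    · exact (hf.contDiffAt (hU.mem_nhds (hKU hy))).differentiableAt (by simp)
    · exact (differentiableAt_const (0 : ℝ)).congr_of_eventuallyEq (hev y hy)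
  have h0' : ∀ y, y ∉ K → pd i f y = 0 := by
    intro y hy
    rw [pd_congr i (hev y hy)]
    simp [pd]
  have hI : Integrable (pd i f) :=
    integrable_of_zero_off hK hKU (pd_contDiffOn hU i hf).continuousOn h0'
  refine ⟨hI, ?_⟩
  rw [setIntegral_eq_integral_of_forall_compl_eq_zero fun y hy => h0' y fun h => hy (hKU h)]
  have hIf : Integrable f := integrable_of_zero_off hK hKU hf.continuousOn h0
  -- Integration by parts against the constant function `1`.
  have := integral_smul_fderiv_eq_neg_fderiv_smul_of_integrable (μ := (volume : Measure (Fin n → ℝ)))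
    (f := fun _ : Fin n → ℝ => (1 : ℝ)) (g := f) (v := Pi.single i 1)
    (by simp) (by simpa using! hI) (by simpa using hIf)
    (fun y _ => differentiableAt_const _) (fun y _ => hd y)
  simpa using! this

end calculus

/-! ### The pointwise estimate -/

/-- The algebra behind the estimate at one point: `g`, `V`, `L`, `S`, `ψ` stand for `Du`, `D²u Du`,
`Δu`, `|Du|² + ε`, `Dφ`, and the equation enters as `S L = -(p - 2) ⟨Du, D²u Du⟩`. -/
lemma algebraic_bound {n : ℕ} (p q : ℝ) (g V ψ : Fin n → ℝ) (L S P φ : ℝ) (hP : 0 < P) (hS : 0 < S)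
    (hG : ∑ i, g i ^ 2 ≤ S) (hL : S * L = -(p - 2) * ∑ i, g i * V i) :
    L ^ 2 * (P * S) * φ ^ 2
        - ∑ i, (V i - L * g i) * (q * P * V i * φ ^ 2 + 2 * (P * S) * φ * ψ i)
      ≤ ((p - 2) ^ 2 + |q| * (3 + 2 * (p - 2) ^ 2) / 2 + 2 * (1 + (p - 2) ^ 2) + 1)
        * ((∑ i, V i ^ 2) * P * φ ^ 2 + P * S ^ 2 * ∑ i, ψ i ^ 2) := by
  set a := ∑ i, V i ^ 2 with ha
  set b := ∑ i, ψ i ^ 2 with hb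
  set X : Fin n → ℝ := fun i => V i - L * g i with hX
  have ha0 : 0 ≤ a := Finset.sum_nonneg fun i _ => sq_nonneg _
  have hb0 : 0 ≤ b := Finset.sum_nonneg fun i _ => sq_nonneg _
  have hCS : (∑ i, g i * V i) ^ 2 ≤ S * a :=
    (Finset.sum_mul_sq_le_sq_mul_sq _ _ _).trans (mul_le_mul_of_nonneg_right hG ha0)
  have hLS : L ^ 2 * S ≤ (p - 2) ^ 2 * a := by
    have h1 : S * (L ^ 2 * S) ≤ S * ((p - 2) ^ 2 * a) := by
      calc S * (L ^ 2 * S) = (S * L) ^ 2 := by ring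
        _ = (p - 2) ^ 2 * (∑ i, g i * V i) ^ 2 := by rw [hL]; ring
        _ ≤ (p - 2) ^ 2 * (S * a) := mul_le_mul_of_nonneg_left hCS (sq_nonneg _)
        _ = _ := by ring
    exact le_of_mul_le_mul_left h1 hS
  have hXX : ∑ i, X i ^ 2 ≤ 2 * (1 + (p - 2) ^ 2) * a := by
    calc ∑ i, X i ^ 2 ≤ ∑ i, (2 * V i ^ 2 + 2 * L ^ 2 * g i ^ 2) :=
          Finset.sum_le_sum fun i _ => by
            simp only [hX]; nlinarith [sq_nonneg (V i + L * g i)]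
      _ = 2 * a + 2 * L ^ 2 * ∑ i, g i ^ 2 := by
          rw [Finset.sum_add_distrib, ← Finset.mul_sum, ← Finset.mul_sum]
      _ ≤ 2 * a + 2 * L ^ 2 * S := by gcongr
      _ ≤ _ := by nlinarith
  have hXV : -(q * ∑ i, X i * V i) ≤ |q| * (3 + 2 * (p - 2) ^ 2) / 2 * a := by
    have h1 : |∑ i, X i * V i| ≤ (∑ i, X i ^ 2 + a) / 2 := by
      rw [abs_le, ha, ← Finset.sum_add_distrib, ← neg_div, Finset.sum_div, ← Finset.sum_neg_distrib,
        Finset.sum_div]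
      constructor <;> refine Finset.sum_le_sum fun i _ => ?_
      · nlinarith [sq_nonneg (X i + V i)]
      · nlinarith [sq_nonneg (X i - V i)]
    calc -(q * ∑ i, X i * V i) ≤ |q * ∑ i, X i * V i| := neg_le_abs _
      _ = |q| * |∑ i, X i * V i| := abs_mul _ _
      _ ≤ |q| * ((2 * (1 + (p - 2) ^ 2) * a + a) / 2) := by
          refine mul_le_mul_of_nonneg_left (h1.trans ?_) (abs_nonneg q)
          linarith
      _ = _ := by ring
  have hXψ : -(2 * S * φ * ∑ i, X i * ψ i) ≤ 2 * (1 + (p - 2) ^ 2) * a * φ ^ 2 + S ^ 2 * b := by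
    calc -(2 * S * φ * ∑ i, X i * ψ i) = ∑ i, -(2 * S * φ * (X i * ψ i)) := by
          rw [Finset.mul_sum, Finset.sum_neg_distrib]
      _ ≤ ∑ i, (φ ^ 2 * X i ^ 2 + S ^ 2 * ψ i ^ 2) :=
          Finset.sum_le_sum fun i _ => by nlinarith [sq_nonneg (φ * X i + S * ψ i)]
      _ = (∑ i, X i ^ 2) * φ ^ 2 + S ^ 2 * b := by
          rw [Finset.sum_add_distrib, ← Finset.mul_sum, ← Finset.mul_sum, mul_comm (φ ^ 2)]
      _ ≤ _ := by gcongr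
  have hexp : ∑ i, (V i - L * g i) * (q * P * V i * φ ^ 2 + 2 * (P * S) * φ * ψ i)
      = P * (q * (∑ i, X i * V i) * φ ^ 2 + 2 * S * φ * ∑ i, X i * ψ i) := by
    simp only [Finset.mul_sum, Finset.sum_mul, ← Finset.sum_add_distrib]
    exact Finset.sum_congr rfl fun i _ => by ring
  rw [hexp]
  have h1 : L ^ 2 * S * φ ^ 2 ≤ (p - 2) ^ 2 * a * φ ^ 2 := by gcongr
  have h2 : -(q * ∑ i, X i * V i) * φ ^ 2 ≤ |q| * (3 + 2 * (p - 2) ^ 2) / 2 * a * φ ^ 2 := by gcongr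
  set A := |q| * (3 + 2 * (p - 2) ^ 2) / 2 with hA
  have hA0 : 0 ≤ A := by positivity
  set B := (p - 2) ^ 2
  have hB0 : 0 ≤ B := sq_nonneg _
  have h3 : 0 ≤ a * φ ^ 2 := by positivity
  have h4 : 0 ≤ (B + A + 2 * (1 + B)) * (S ^ 2 * b) := by positivity
  have h5 : L ^ 2 * S * φ ^ 2 - (q * (∑ i, X i * V i) * φ ^ 2 + 2 * S * φ * ∑ i, X i * ψ i)
      ≤ (B + A + 2 * (1 + B) + 1) * (a * φ ^ 2 + S ^ 2 * b) := by linarith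
  calc _ = P * (L ^ 2 * S * φ ^ 2
        - (q * (∑ i, X i * V i) * φ ^ 2 + 2 * S * φ * ∑ i, X i * ψ i)) := by ring
    _ ≤ P * ((B + A + 2 * (1 + B) + 1) * (a * φ ^ 2 + S ^ 2 * b)) :=
        mul_le_mul_of_nonneg_left h5 hP.le
    _ = _ := by ring

section pointwise

variable {n : ℕ} {U : Set (Fin n → ℝ)} {u : (Fin n → ℝ) → ℝ} {x : Fin n → ℝ}

/-- The square of the weight, `μ² = |Du|² + ε`. -/
noncomputable def wt (ε : ℝ) (u : (Fin n → ℝ) → ℝ) (x : Fin n → ℝ) : ℝ :=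
  (∑ j, pd j u x ^ 2) + ε

lemma wt_pos {ε : ℝ} (hε : 0 < ε) : 0 < wt ε u x :=
  add_pos_of_nonneg_of_pos (Finset.sum_nonneg fun _ _ => sq_nonneg _) hε

lemma mu_rpow_s11 {ε : ℝ} (hε : 0 < ε) (a : ℝ) : mu ε u x ^ a = wt ε u x ^ (a / 2) := by
  have : mu ε u x = wt ε u x ^ (1 / 2 : ℝ) := Real.sqrt_eq_rpow _
  rw [this, ← Real.rpow_mul (wt_pos hε).le]
  congr 1
  ring

lemma wt_contDiffOn (hU : IsOpen U) (hu : ContDiffOn ℝ (⊤ : ℕ∞) u U) (ε : ℝ) :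
    ContDiffOn ℝ (⊤ : ℕ∞) (wt ε u) U :=
  (ContDiffOn.sum fun j _ => (pd_contDiffOn hU j hu).pow 2).add contDiffOn_const

lemma wt_rpow_contDiffOn (hU : IsOpen U) (hu : ContDiffOn ℝ (⊤ : ℕ∞) u U) {ε : ℝ} (hε : 0 < ε)
    (a : ℝ) : ContDiffOn ℝ (⊤ : ℕ∞) (fun y => wt ε u y ^ a) U :=
  (wt_contDiffOn hU hu ε).rpow_const_of_ne fun _ _ => (wt_pos hε).ne'

lemma diffAt_of_contDiffOn {f : (Fin n → ℝ) → ℝ} (hU : IsOpen U)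
    (hf : ContDiffOn ℝ (⊤ : ℕ∞) f U) (hx : x ∈ U) : DifferentiableAt ℝ f x :=
  (hf.contDiffAt (hU.mem_nhds hx)).differentiableAt (by simp)

lemma pd_wt (hU : IsOpen U) (hu : ContDiffOn ℝ (⊤ : ℕ∞) u U) (ε : ℝ) (hx : x ∈ U) (i : Fin n) :
    pd i (wt ε u) x = 2 * ∑ j, pd i (pd j u) x * pd j u x := by
  have hd : ∀ j, DifferentiableAt ℝ (pd j u) x := fun j =>
    diffAt_of_contDiffOn hU (pd_contDiffOn hU j hu) hx
  have h1 : pd i (wt ε u) x = pd i (fun y => ∑ j, pd j u y * pd j u y) x := by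
    unfold pd
    have : wt ε u = fun y => (∑ j, pd j u y * pd j u y) + ε := by
      funext y; simp [wt, sq]
    rw [this, fderiv_add_const]
    rfl
  rw [h1, pd_sum i fun j => (hd j).fun_mul (hd j), Finset.mul_sum]
  refine Finset.sum_congr rfl fun j _ => ?_
  rw [pd_mul i (hd j) (hd j)]
  ring

/-- The equation in nondivergence form, `(|Du|² + ε) Δu = -(p - 2) ⟨Du, D²u Du⟩`. -/
lemma laplacian_eq {p ε : ℝ} (hU : IsOpen U) (hu : ContDiffOn ℝ (⊤ : ℕ∞) u U) (hε : 0 < ε)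
    (heq : RegularizedPLaplace p ε u U) (hx : x ∈ U) :
    wt ε u x * ∑ i, pd i (pd i u) x
      = -(p - 2) * ∑ i, pd i u x * ∑ j, pd i (pd j u) x * pd j u x := by
  have h := heq x hx
  have hS := wt_pos (u := u) (x := x) hε
  have h1 : ∀ i, fderiv ℝ
      (fun y => ((∑ j, grad u y j ^ 2) + ε) ^ ((p - 2) / 2) * grad u y i) x (Pi.single i 1)
      = wt ε u x ^ ((p - 2) / 2 - 1) * ((p - 2) * (pd i u x * ∑ j, pd i (pd j u) x * pd j u x)
        + wt ε u x * pd i (pd i u) x) := by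
    intro i
    change pd i (fun y => wt ε u y ^ ((p - 2) / 2) * pd i u y) x = _
    rw [pd_mul i (diffAt_of_contDiffOn hU (wt_rpow_contDiffOn hU hu hε _) hx)
      (diffAt_of_contDiffOn hU (pd_contDiffOn hU i hu) hx),
      pd_rpow i _ (diffAt_of_contDiffOn hU (wt_contDiffOn hU hu ε) hx) hS.ne',
      pd_wt hU hu ε hx]
    have : wt ε u x ^ ((p - 2) / 2) = wt ε u x ^ ((p - 2) / 2 - 1) * wt ε u x := by
      rw [← Real.rpow_add_one hS.ne']; congr 1; ring
    rw [this]
    ring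
  simp only [h1] at h
  rw [← Finset.mul_sum] at h
  have h2 := (mul_eq_zero.mp h).resolve_left (Real.rpow_pos_of_pos hS _).ne'
  rw [Finset.sum_add_distrib, ← Finset.mul_sum, ← Finset.mul_sum] at h2
  linarith

/-- The vector field `D²u Du - Δu Du`. Its divergence `|D²u|² - (Δu)²` contains no third
derivatives of `u`. -/
noncomputable def fld (u : (Fin n → ℝ) → ℝ) (i : Fin n) (x : Fin n → ℝ) : ℝ :=
  (∑ j, pd i (pd j u) x * pd j u x) - (∑ j, pd j (pd j u) x) * pd i u x

lemma fld_contDiffOn (hU : IsOpen U) (hu : ContDiffOn ℝ (⊤ : ℕ∞) u U) (i : Fin n) :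
    ContDiffOn ℝ (⊤ : ℕ∞) (fld u i) U := by
  have h1 := fun j => pd_contDiffOn hU j hu
  have h2 := fun k j => pd_contDiffOn hU k (h1 j)
  exact (ContDiffOn.sum fun j _ => (h2 i j).mul (h1 j)).sub
    ((ContDiffOn.sum fun j _ => h2 j j).mul (h1 i))

lemma div_fld (hU : IsOpen U) (hu : ContDiffOn ℝ (⊤ : ℕ∞) u U) (hx : x ∈ U) :
    ∑ i, pd i (fld u i) x
      = (∑ i, ∑ j, pd i (pd j u) x ^ 2) - (∑ i, pd i (pd i u) x) ^ 2 := by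
  have c1 := fun j => pd_contDiffOn hU j hu
  have c2 := fun k j => pd_contDiffOn hU k (c1 j)
  have d1 := fun j => diffAt_of_contDiffOn hU (c1 j) hx
  have d2 := fun k j => diffAt_of_contDiffOn hU (c2 k j) hx
  have hthird : ∀ i j, pd i (pd i (pd j u)) x = pd j (pd i (pd i u)) x := by
    intro i j
    have : pd i (pd j u) =ᶠ[𝓝 x] pd j (pd i u) := by
      filter_upwards [hU.mem_nhds hx] with y hy using pd_comm hU hu hy i j
    rw [pd_congr i this, pd_comm hU (c1 i) hx]
  have h1 : ∀ i, pd i (fld u i) x = (∑ j, pd j (pd i (pd i u)) x * pd j u x)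
      + (∑ j, pd i (pd j u) x ^ 2)
      - (∑ j, pd i (pd j (pd j u)) x * pd i u x)
      - (∑ j, pd j (pd j u) x) * pd i (pd i u) x := by
    intro i
    change pd i (fun y => (∑ j, pd i (pd j u) y * pd j u y)
      - (∑ j, pd j (pd j u) y) * pd i u y) x = _
    rw [pd_sub i (DifferentiableAt.fun_sum fun j _ => (d2 i j).fun_mul (d1 j))
        ((DifferentiableAt.fun_sum fun j _ => d2 j j).fun_mul (d1 i)),
      pd_sum i (fun j => (d2 i j).fun_mul (d1 j)),
      pd_mul i (DifferentiableAt.fun_sum fun j _ => d2 j j) (d1 i),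
      pd_sum i fun j => d2 j j, Finset.sum_mul, ← Finset.sum_add_distrib]
    have : ∀ j, pd i (fun y => pd i (pd j u) y * pd j u y) x
        = pd j (pd i (pd i u)) x * pd j u x + pd i (pd j u) x ^ 2 := by
      intro j
      rw [pd_mul i (d2 i j) (d1 j), hthird]
      ring
    simp only [this]
    ring
  simp only [h1, Finset.sum_sub_distrib, Finset.sum_add_distrib]
  rw [Finset.sum_comm (f := fun i j => pd j (pd i (pd i u)) x * pd j u x), ← Finset.mul_sum]
  ring

/-- The Hessian term is bounded by the right-hand side up to an exact divergence. -/
lemma pointwise_bound {p s ε : ℝ} (hU : IsOpen U) (hu : ContDiffOn ℝ (⊤ : ℕ∞) u U) (hε : 0 < ε)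
    (heq : RegularizedPLaplace p ε u U) {φ : (Fin n → ℝ) → ℝ} (hφ : ContDiff ℝ (⊤ : ℕ∞) φ)
    (hx : x ∈ U) :
    (∑ i, ∑ j, hess u x i j ^ 2) * mu ε u x ^ (p - 2 + s) * φ x ^ 2
      ≤ ((p - 2) ^ 2 + |p - 2 + s| * (3 + 2 * (p - 2) ^ 2) / 2 + 2 * (1 + (p - 2) ^ 2) + 1)
        * ((∑ i, ((hess u x).mulVec (grad u x) i) ^ 2) * mu ε u x ^ (p - 4 + s) * φ x ^ 2
          + mu ε u x ^ (p + s) * (∑ i, (fderiv ℝ φ x (Pi.single i 1)) ^ 2))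
        + ∑ i, pd i (fun y => wt ε u y ^ ((p - 2 + s) / 2) * (φ y * φ y) * fld u i y) x := by
  have hS := wt_pos (u := u) (x := x) hε
  set S := wt ε u x with hSdef
  set P := S ^ ((p - 4 + s) / 2) with hP
  have hP0 : 0 < P := Real.rpow_pos_of_pos hS _
  have e1 : S ^ ((p - 2 + s) / 2) = P * S := by
    rw [hP, ← Real.rpow_add_one hS.ne']; congr 1; ring
  have e2 : S ^ ((p + s) / 2) = P * S ^ 2 := by
    rw [sq, ← mul_assoc, ← e1, ← Real.rpow_add_one hS.ne']; congr 1; ring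
  have e3 : S ^ ((p - 2 + s) / 2 - 1) = P := by
    rw [hP]; congr 1; ring
  rw [mu_rpow_s11 hε, mu_rpow_s11 hε, mu_rpow_s11 hε, ← hSdef, e1, e2, ← hP]
  have dφ : DifferentiableAt ℝ φ x := hφ.contDiffAt.differentiableAt (by simp)
  have dw := diffAt_of_contDiffOn hU (wt_rpow_contDiffOn hU hu hε ((p - 2 + s) / 2)) hx
  have hdiv : ∑ i, pd i (fun y => wt ε u y ^ ((p - 2 + s) / 2) * (φ y * φ y) * fld u i y) x
      = P * S * φ x ^ 2
          * ((∑ i, ∑ j, pd i (pd j u) x ^ 2) - (∑ i, pd i (pd i u) x) ^ 2)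
        + ∑ i, fld u i x * ((p - 2 + s) * P * (∑ j, pd i (pd j u) x * pd j u x) * φ x ^ 2
          + 2 * (P * S) * φ x * pd i φ x) := by
    rw [← div_fld hU hu hx, Finset.mul_sum, ← Finset.sum_add_distrib]
    refine Finset.sum_congr rfl fun i _ => ?_
    rw [pd_mul i (dw.fun_mul (dφ.fun_mul dφ)) (diffAt_of_contDiffOn hU (fld_contDiffOn hU hu i) hx),
      pd_mul i dw (dφ.fun_mul dφ), pd_mul i dφ dφ,
      pd_rpow i _ (diffAt_of_contDiffOn hU (wt_contDiffOn hU hu ε) hx) hS.ne',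
      pd_wt hU hu ε hx, ← hSdef, e1, e3]
    ring
  have hb := algebraic_bound p (p - 2 + s) (fun i => pd i u x)
    (fun i => ∑ j, pd i (pd j u) x * pd j u x) (fun i => pd i φ x) (∑ i, pd i (pd i u) x)
    S P (φ x) hP0 hS (by rw [hSdef, wt]; linarith) (laplacian_eq hU hu hε heq hx)
  rw [hdiv]
  change (∑ i, ∑ j, pd i (pd j u) x ^ 2) * (P * S) * φ x ^ 2
      ≤ _ * ((∑ i, (∑ j, pd i (pd j u) x * pd j u x) ^ 2) * P * φ x ^ 2
        + P * S ^ 2 * ∑ i, pd i φ x ^ 2) + _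
  simp only [fld]
  linarith

end pointwise

/-! ### Integration of the pointwise estimate -/

/-- There is `C = C(p, s) > 0` such that for every smooth compactly supported
`φ` with support in `U`,
`∫_U |D²u|² μ^{p−2+s} φ² ≤ C (∫_U |D²u Du|² μ^{p−4+s} φ² + ∫_U μ^{p+s} |Dφ|²)`. -/
theorem caccioppoli_estimate_for_hessian (p : ℝ) (hp : 1 < p) (s : ℝ) :
    ∃ C > 0, ∀ (n : ℕ), 2 ≤ n → ∀ (ε : ℝ), 0 < ε →
      ∀ (U : Set (Fin n → ℝ)), IsOpen U →
      ∀ (u : (Fin n → ℝ) → ℝ), ContDiffOn ℝ (⊤ : ℕ∞) u U →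
      RegularizedPLaplace p ε u U →
      ∀ (φ : (Fin n → ℝ) → ℝ), ContDiff ℝ (⊤ : ℕ∞) φ → HasCompactSupport φ →
        tsupport φ ⊆ U →
      (∫ x in U, (∑ i, ∑ j, hess u x i j ^ 2) * mu ε u x ^ (p - 2 + s) * φ x ^ 2)
        ≤ C * ((∫ x in U, (∑ i, ((hess u x).mulVec (grad u x) i) ^ 2)
                  * mu ε u x ^ (p - 4 + s) * φ x ^ 2)
            + ∫ x in U, mu ε u x ^ (p + s)
                * (∑ i, (fderiv ℝ φ x (Pi.single i 1)) ^ 2)) := by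
  have hC : 0 < (p - 2) ^ 2 + |p - 2 + s| * (3 + 2 * (p - 2) ^ 2) / 2
      + 2 * (1 + (p - 2) ^ 2) + 1 := by positivity
  refine ⟨_, hC, ?_⟩
  clear hC
  intro n _ ε hε U hU u hu heq φ hφ hφc hφU
  have hpt := fun x (hx : x ∈ U) => pointwise_bound (s := s) hU hu hε heq hφ hx
  generalize (p - 2) ^ 2 + |p - 2 + s| * (3 + 2 * (p - 2) ^ 2) / 2 + 2 * (1 + (p - 2) ^ 2) + 1
    = C at hpt ⊢
  have hK : IsCompact (tsupport φ) := hφc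
  have hφ0 : ∀ y, y ∉ tsupport φ → φ y = 0 := fun y hy => image_eq_zero_of_notMem_tsupport hy
  have c1 := fun j => (pd_contDiffOn hU j hu).continuousOn
  have c2 := fun k j => (pd_contDiffOn hU k (pd_contDiffOn hU j hu)).continuousOn
  have cμ : ∀ a : ℝ, ContinuousOn (fun y => mu ε u y ^ a) U := fun a => by
    simp only [mu_rpow_s11 hε]
    exact (wt_rpow_contDiffOn hU hu hε _).continuousOn
  have cφ2 : ContinuousOn (fun y => φ y ^ 2) U := (hφ.continuous.pow 2).continuousOn
  have I1 : Integrable fun x =>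
      (∑ i, ∑ j, hess u x i j ^ 2) * mu ε u x ^ (p - 2 + s) * φ x ^ 2 :=
    integrable_of_zero_off hK hφU
      (((continuousOn_finsetSum _ fun i _ => continuousOn_finsetSum _ fun j _ =>
        (c2 i j).pow 2).mul (cμ _)).mul cφ2) fun y hy => by simp [hφ0 y hy]
  have cV : ∀ i, ContinuousOn (fun y => (hess u y).mulVec (grad u y) i) U := fun i => by
    have : ContinuousOn (fun y => ∑ j, pd i (pd j u) y * pd j u y) U :=
      continuousOn_finsetSum _ fun j _ => (c2 i j).mul (c1 j)
    exact this
  have I2 : Integrable fun x => (∑ i, ((hess u x).mulVec (grad u x) i) ^ 2)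
      * mu ε u x ^ (p - 4 + s) * φ x ^ 2 :=
    integrable_of_zero_off hK hφU
      (((continuousOn_finsetSum _ fun i _ => (cV i).pow 2).mul (cμ _)).mul cφ2) fun y hy => by simp [hφ0 y hy]
  have cψ := fun i : Fin n => (pd_contDiffOn hU i hφ.contDiffOn).continuousOn
  have I3 : Integrable fun x => mu ε u x ^ (p + s)
      * (∑ i, (fderiv ℝ φ x (Pi.single i 1)) ^ 2) :=
    integrable_of_zero_off hK hφU
      ((cμ _).mul (continuousOn_finsetSum _ fun i _ => (cψ i).pow 2)) fun y hy => by
        have : fderiv ℝ φ y = 0 := by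
          rw [(notMem_tsupport_iff_eventuallyEq.mp hy).fderiv_eq]; simp
        simp [this]
  have hF := fun i : Fin n => integral_pd_eq_zero
    (f := fun y => wt ε u y ^ ((p - 2 + s) / 2) * (φ y * φ y) * fld u i y) hU hK hφU
    (((wt_rpow_contDiffOn hU hu hε _).mul (hφ.contDiffOn.mul hφ.contDiffOn)).mul
      (fld_contDiffOn hU hu i)) (fun y hy => by simp [hφ0 y hy]) i
  have I4 := integrable_finsetSum Finset.univ fun i _ => (hF i).1
  calc _ ≤ ∫ x in U, (C * ((∑ i, ((hess u x).mulVec (grad u x) i) ^ 2)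
            * mu ε u x ^ (p - 4 + s) * φ x ^ 2
          + mu ε u x ^ (p + s) * (∑ i, (fderiv ℝ φ x (Pi.single i 1)) ^ 2))
        + ∑ i, pd i (fun y => wt ε u y ^ ((p - 2 + s) / 2) * (φ y * φ y) * fld u i y) x) :=
        setIntegral_mono_on I1.integrableOn
          (((I2.add I3).const_mul C).add I4).integrableOn hU.measurableSet
          hpt
    _ = _ := by
        rw [integral_add ((I2.fun_add I3).const_mul C).integrableOn I4.integrableOn,
          integral_const_mul, integral_add I2.integrableOn I3.integrableOn,
          integral_finsetSum _ fun i _ => (hF i).1.integrableOn]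
        simp [fun i => (hF i).2]
end
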